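/- arXiv:2012.13795 — 2 statements merged into one kernel-verified Lean document; each statement's English description precedes it below -/
import Mathlib

section
/- For any nonempty permutations α and β, the permutation α ⊕ 1 ⊕ β is an annihilator: every permutation π containing an interval copy of α ⊕ 1 ⊕ β satisfies μ(1,π) = 0. -/
/-!
The permutation pattern poset and its Möbius function.

A permutation of length `n` is represented as an element of the symmetric
group on `Fin n`; the collection of all permutations of all lengths is the
sigma type `PPerm`.  Pattern containment `PPerm.Le` makes `PPerm` into the
permutation pattern poset, and `mu` is its Möbius function, defined by the
usual recursion `μ(σ,σ) = 1`, `μ(σ,π) = -∑_{σ ≤ λ < π} μ(σ,λ)` for `σ < π`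
and `μ(σ,π) = 0` otherwise.
-/

open scoped Classical

/-- A permutation of an arbitrary finite length `n`, as an element of the
symmetric group on `Fin n`. -/
abbrev PPerm : Type := Σ n : ℕ, Equiv.Perm (Fin n)

namespace PPerm

/-- Classical pattern containment `σ ≤ π`: there is a strictly increasing map
of positions along which `π` realises the same relative order as `σ`. -/
def Le (σ π : PPerm) : Prop :=
  ∃ f : Fin σ.1 → Fin π.1, StrictMono f ∧
    ∀ a b : Fin σ.1, σ.2 a < σ.2 b ↔ π.2 (f a) < π.2 (f b)

/-- Strict pattern containment. -/
def Lt (σ π : PPerm) : Prop := Le σ π ∧ σ ≠ π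

/-- The permutation `1` of length one. -/
def one : PPerm := ⟨1, 1⟩

/-- The direct sum `α ⊕ β` of two permutations: `β` is placed after and
above `α`. -/
def dsum (α β : PPerm) : PPerm :=
  ⟨α.1 + β.1, finSumFinEquiv.symm.trans ((Equiv.sumCongr α.2 β.2).trans finSumFinEquiv)⟩

end PPerm

/-- Fuelled recursion computing the Möbius function of the permutation
pattern poset.  Any `λ` with `σ ≤ λ < π` has length `< |π|`, so for any
fuel `≥ |π| + 1` this computes the standard recursion
`μ(σ,σ) = 1`, `μ(σ,π) = -∑_{σ ≤ λ < π} μ(σ,λ)` for `σ < π`, and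
`μ(σ,π) = 0` when `σ ≰ π`. -/
noncomputable def muAux : ℕ → PPerm → PPerm → ℤ
  | 0, _, _ => 0
  | n + 1, σ, π =>
    if σ = π then 1
    else if PPerm.Le σ π then
      - ∑ m ∈ Finset.range π.1,
          ∑ p ∈ Finset.univ.filter
              (fun p : Equiv.Perm (Fin m) => PPerm.Le σ ⟨m, p⟩ ∧ PPerm.Le ⟨m, p⟩ π),
            muAux n σ ⟨m, p⟩
    else 0

/-- The Möbius function of the permutation pattern poset. -/
noncomputable def mu (σ π : PPerm) : ℤ := muAux (π.1 + 1) σ π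

/-- The closed interval `[σ, π]` of the permutation pattern poset, as a
finset (any `λ ≤ π` has length `≤ |π|`). -/
noncomputable def intervalCC (σ π : PPerm) : Finset PPerm :=
  (Finset.range (π.1 + 1)).biUnion fun m =>
    (Finset.univ.filter fun p : Equiv.Perm (Fin m) =>
        PPerm.Le σ ⟨m, p⟩ ∧ PPerm.Le ⟨m, p⟩ π).image fun p => (⟨m, p⟩ : PPerm)

/-- The half-open interval `[σ, π)` of the permutation pattern poset. -/
noncomputable def intervalCO (σ π : PPerm) : Finset PPerm :=
  (intervalCC σ π).filter fun lam => lam ≠ π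

/-- `π` contains an interval copy of `α`: there is a set of `|α|` contiguous
positions of `π` (starting at position `i`), whose values form a contiguous
range (starting at value `v`), and whose entries are order-isomorphic
to `α`. -/
def HasIntervalCopy (π α : PPerm) : Prop :=
  ∃ (f : Fin α.1 → Fin π.1) (i v : ℕ),
    (∀ a : Fin α.1, (f a : ℕ) = i + (a : ℕ)) ∧
    (∀ a : Fin α.1, v ≤ (π.2 (f a) : ℕ) ∧ (π.2 (f a) : ℕ) < v + α.1) ∧
    (∀ a b : Fin α.1, α.2 a < α.2 b ↔ π.2 (f a) < π.2 (f b))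

/-!
Let `m` be the entry of `π` in the role of the `1` in an interval copy of `α ⊕ 1 ⊕ β`, and let `ρ`
be `π` with `m` deleted. Consider a pattern `τ` of `π`. If some embedding of `τ` uses `m` but no
entry of the copy of `α` (or none of the copy of `β`), then `m` can be exchanged for any such unused
entry, and so `τ ≤ ρ`. Hence if `τ ≰ ρ`, then an embedding of `τ` uses `m` and meets both `α` and
`β`, and `τ` inherits an interval copy of some `α' ⊕ 1 ⊕ β'`. By induction `μ(1, τ) = 0` for all
`τ < π` with `τ ≰ ρ`, so `μ(1, π) = -∑_{1 ≤ τ ≤ ρ} μ(1, τ)`. This sum is `0` because `ρ ≠ 1`: the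
interval copy of `α ⊕ β` in `ρ` has no counterpart in `1`.
-/

theorem incidenceAlgebra_mu_eq_zero_of_lt {𝕜 P : Type*} [AddCommGroup 𝕜] [One 𝕜] [PartialOrder P]
    [LocallyFiniteOrder P] [DecidableEq P] {a b c : P} (hac : a < c) (hcb : c < b)
    (h : ∀ x, a ≤ x → x < b → ¬x ≤ c → IncidenceAlgebra.mu 𝕜 a x = 0) :
    IncidenceAlgebra.mu 𝕜 a b = 0 := by
  have hsub : Finset.Icc a c ⊆ Finset.Ico a b := Finset.Icc_subset_Ico_right hcb
  have hsum : ∑ x ∈ Finset.Icc a c, IncidenceAlgebra.mu 𝕜 a x =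
      ∑ x ∈ Finset.Ico a b, IncidenceAlgebra.mu 𝕜 a x :=
    Finset.sum_subset hsub fun x hx hxc ↦ by
      rw [Finset.mem_Ico] at hx
      exact h x hx.1 hx.2 fun hle ↦ hxc (Finset.mem_Icc.2 ⟨hx.1, hle⟩)
  rw [IncidenceAlgebra.mu_eq_neg_sum_Ico_of_ne (hac.trans hcb).ne, ← hsum,
    IncidenceAlgebra.sum_Icc_mu_right, if_neg hac.ne, neg_zero]

namespace PPerm

variable {σ τ ρ π : PPerm}

/-! ### Embeddings and the pattern poset -/

/-- `f` is an embedding (occurrence) of `σ` in `π`, given as a map of positions; `Le σ π` unfolds to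
`∃ f, IsEmbedding σ π f`. -/
def IsEmbedding (σ π : PPerm) (f : Fin σ.1 → Fin π.1) : Prop :=
  StrictMono f ∧ ∀ a b, σ.2 a < σ.2 b ↔ π.2 (f a) < π.2 (f b)

theorem IsEmbedding.comp {g : Fin τ.1 → Fin π.1} {f : Fin σ.1 → Fin τ.1}
    (hg : IsEmbedding τ π g) (hf : IsEmbedding σ τ f) : IsEmbedding σ π (g ∘ f) :=
  ⟨hg.1.comp hf.1, fun a b ↦ (hf.2 a b).trans (hg.2 _ _)⟩

theorem IsEmbedding.le_of_range_subset {f : Fin σ.1 → Fin π.1} {g : Fin ρ.1 → Fin π.1}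
    (hf : IsEmbedding σ π f) (hg : IsEmbedding ρ π g) (h : Set.range f ⊆ Set.range g) :
    Le σ ρ := by
  choose e he using fun a ↦ h (Set.mem_range_self a)
  refine ⟨e, fun a b hab ↦ ?_, fun a b ↦ ?_⟩
  · rw [← hg.1.lt_iff_lt, he, he]
    exact hf.1 hab
  · rw [hf.2, hg.2, he, he]

theorem exists_isEmbedding_range_eq (π : PPerm) (S : Finset (Fin π.1)) :
    ∃ (ρ : PPerm) (g : Fin ρ.1 → Fin π.1), IsEmbedding ρ π g ∧ Set.range g = S := by
  let positions := S.orderIsoOfFin rfl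
  let values := (S.map π.2.toEmbedding).orderIsoOfFin (S.card_map _)
  let e : S ≃ S.map π.2.toEmbedding := π.2.subtypeEquiv fun a ↦ by simp
  refine ⟨⟨S.card, positions.toEquiv.trans (e.trans values.symm.toEquiv)⟩, S.orderEmbOfFin rfl,
    ⟨(S.orderEmbOfFin rfl).strictMono, fun a b ↦ ?_⟩, S.range_orderEmbOfFin rfl⟩
  exact values.symm.lt_iff_lt

theorem length_le_of_le (h : Le σ π) : σ.1 ≤ π.1 := by
  obtain ⟨f, hf, -⟩ := h
  simpa using Fintype.card_le_of_injective f hf.injective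

theorem eq_of_le_of_length_eq (h : Le σ π) (hlen : σ.1 = π.1) : σ = π := by
  obtain ⟨n, p⟩ := σ
  obtain ⟨_, q⟩ := π
  obtain rfl : n = _ := hlen
  obtain ⟨f, hf, hfv⟩ := h
  obtain rfl : f = id := hf.eq_id
  have hmono : StrictMono (q ∘ p.symm) := fun x y hxy ↦
    (hfv (p.symm x) (p.symm y)).1 (by simpa using hxy)
  have hqp : ∀ x, q x = p x := fun x ↦ by
    simpa using congrFun hmono.eq_id (p x)
  rw [Equiv.ext hqp]

instance : PartialOrder PPerm where
  le := Le
  le_refl _ := ⟨id, strictMono_id, fun _ _ ↦ Iff.rfl⟩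
  le_trans _ _ _ := fun ⟨_, hf⟩ ⟨_, hg⟩ ↦ ⟨_, IsEmbedding.comp hg hf⟩
  le_antisymm _ _ h h' :=
    eq_of_le_of_length_eq h (le_antisymm (length_le_of_le h) (length_le_of_le h'))

theorem length_lt_of_lt (h : σ < π) : σ.1 < π.1 :=
  (length_le_of_le h.le).lt_of_ne fun hlen ↦ h.ne (eq_of_le_of_length_eq h.le hlen)

theorem mem_intervalCC : τ ∈ intervalCC σ π ↔ σ ≤ τ ∧ τ ≤ π := by
  simp only [intervalCC, Finset.mem_biUnion, Finset.mem_range, Finset.mem_image,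
    Finset.mem_filter, Finset.mem_univ, true_and]
  constructor
  · rintro ⟨m, -, p, h, rfl⟩
    exact h
  · exact fun h ↦ ⟨τ.1, Nat.lt_succ_of_le (length_le_of_le h.2), τ.2, h, rfl⟩

noncomputable instance : LocallyFiniteOrder PPerm :=
  LocallyFiniteOrder.ofIcc PPerm intervalCC fun _ _ _ ↦ mem_intervalCC

theorem Ico_eq_sigma (σ π : PPerm) :
    Finset.Ico σ π = (Finset.range π.1).sigma fun m ↦
      Finset.univ.filter fun p : Equiv.Perm (Fin m) ↦ Le σ ⟨m, p⟩ ∧ Le ⟨m, p⟩ π := by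
  ext τ
  simp only [Finset.mem_Ico, Finset.mem_sigma, Finset.mem_range, Finset.mem_filter,
    Finset.mem_univ, true_and]
  constructor
  · exact fun h ↦ ⟨length_lt_of_lt h.2, h.1, h.2.le⟩
  · rintro ⟨hlen, hσ, hπ⟩
    exact ⟨hσ, lt_of_le_of_ne hπ fun h ↦ hlen.ne (congrArg Sigma.fst h)⟩

theorem muAux_eq_incidenceAlgebra_mu (σ : PPerm) :
    ∀ {n : ℕ} {π : PPerm}, π.1 < n → muAux n σ π = IncidenceAlgebra.mu ℤ σ π
  | n + 1, π, hn => by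
    by_cases heq : σ = π
    · simp [muAux, heq]
    by_cases hle : Le σ π
    · rw [muAux, if_neg heq, if_pos hle, IncidenceAlgebra.mu_eq_neg_sum_Ico_of_ne heq,
        Ico_eq_sigma, Finset.sum_sigma]
      refine congrArg Neg.neg <| Finset.sum_congr rfl fun m hm ↦ Finset.sum_congr rfl fun p _ ↦ ?_
      exact muAux_eq_incidenceAlgebra_mu σ
        ((Finset.mem_range.1 hm).trans_le (Nat.le_of_lt_succ hn))
    · rw [muAux, if_neg heq, if_neg hle, IncidenceAlgebra.apply_eq_zero_of_not_le hle]

theorem mu_eq_incidenceAlgebra_mu (σ π : PPerm) : mu σ π = IncidenceAlgebra.mu ℤ σ π :=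
  muAux_eq_incidenceAlgebra_mu σ π.1.lt_succ_self

/-! ### Intervals -/

/-- The entries of `π` at positions `s` and `t` lie on the same side of the entry at position `x`,
horizontally as well as vertically. -/
def SameSide (π : PPerm) (x s t : Fin π.1) : Prop :=
  ((x < s ↔ x < t) ∧ (s < x ↔ t < x)) ∧
    (π.2 x < π.2 s ↔ π.2 x < π.2 t) ∧ (π.2 s < π.2 x ↔ π.2 t < π.2 x)

/-- The positions in `S` form an interval of `π`. Contiguity of positions and values is encoded as:
no entry outside `S` separates two entries in `S`. -/
def IsInterval (π : PPerm) (S : Set (Fin π.1)) : Prop :=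
  ∀ x ∉ S, ∀ s ∈ S, ∀ t ∈ S, SameSide π x s t

theorem isInterval_univ : IsInterval π Set.univ := fun _ hx ↦ absurd (Set.mem_univ _) hx

theorem IsEmbedding.sameSide_iff {f : Fin σ.1 → Fin π.1} (hf : IsEmbedding σ π f)
    {x s t : Fin σ.1} : SameSide π (f x) (f s) (f t) ↔ SameSide σ x s t := by
  simp only [SameSide, hf.2, hf.1.lt_iff_lt]

theorem IsInterval.preimage {S : Set (Fin π.1)} (hS : IsInterval π S) {f : Fin σ.1 → Fin π.1}
    (hf : IsEmbedding σ π f) : IsInterval σ (f ⁻¹' S) :=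
  fun _ hx _ hs _ ht ↦ hf.sameSide_iff.1 (hS _ hx _ hs _ ht)

theorem IsInterval.image {S : Set (Fin σ.1)} (hS : IsInterval σ S) {f : Fin σ.1 → Fin π.1}
    (hf : IsEmbedding σ π f) (hrange : IsInterval π (Set.range f)) : IsInterval π (f '' S) := by
  rintro x hx _ ⟨s, hs, rfl⟩ _ ⟨t, ht, rfl⟩
  by_cases hxf : x ∈ Set.range f
  · obtain ⟨y, rfl⟩ := hxf
    exact hf.sameSide_iff.2 (hS y (fun hy ↦ hx ⟨y, hy, rfl⟩) s hs t ht)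
  · exact hrange x hxf _ ⟨s, rfl⟩ _ ⟨t, rfl⟩

theorem IsEmbedding.exchange {f : Fin σ.1 → Fin π.1} (hf : IsEmbedding σ π f) {m c : Fin π.1}
    (h : ∀ a, f a ≠ m → SameSide π (f a) m c) :
    IsEmbedding σ π (Function.update id m c ∘ f) := by
  have hpos : ∀ a b, Function.update id m c (f a) < Function.update id m c (f b) ↔ f a < f b := by
    intro a b
    have ha := h a
    have hb := h b
    simp only [SameSide, Function.update_apply, id] at *
    grind
  have hval : ∀ a b, π.2 (Function.update id m c (f a)) < π.2 (Function.update id m c (f b)) ↔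
      π.2 (f a) < π.2 (f b) := by
    intro a b
    have ha := h a
    have hb := h b
    simp only [SameSide, Function.update_apply, id] at *
    grind
  exact ⟨fun a b hab ↦ (hpos a b).2 (hf.1 hab), fun a b ↦ (hf.2 a b).trans (hval a b).symm⟩

theorem IsEmbedding.le_of_exchange {f : Fin σ.1 → Fin π.1} (hf : IsEmbedding σ π f)
    {m c : Fin π.1} (hcm : c ≠ m) (h : ∀ a, f a ≠ m → SameSide π (f a) m c)
    {g : Fin ρ.1 → Fin π.1} (hg : IsEmbedding ρ π g) (hrange : Set.range g = {m}ᶜ) :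
    Le σ ρ := by
  refine (hf.exchange h).le_of_range_subset hg ?_
  rw [hrange]
  rintro _ ⟨a, rfl⟩
  by_cases ha : f a = m <;> simp [ha, hcm]

/-! ### Intervals that are sums -/

/-- `A ∪ B` is an interval copy in `π` of some `γ ⊕ δ` with `γ` and `δ` nonempty, where `A` are the
positions of `γ` and `B` those of `δ`. -/
structure IsSumInterval (π : PPerm) (A B : Set (Fin π.1)) : Prop where
  isInterval : IsInterval π (A ∪ B)
  left_nonempty : A.Nonempty
  right_nonempty : B.Nonempty
  lt : ∀ s ∈ A, ∀ t ∈ B, s < t ∧ π.2 s < π.2 t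

/-- `A ∪ {m} ∪ B` is an interval copy in `π` of some `α ⊕ 1 ⊕ β` with `α` and `β` nonempty, where
`A`, `m`, `B` are the positions of the three summands. It is encoded as `α ⊕ (1 ⊕ β)`. -/
structure IsSumOneSumInterval (π : PPerm) (A : Set (Fin π.1)) (m : Fin π.1)
    (B : Set (Fin π.1)) : Prop where
  isSumInterval : IsSumInterval π A (insert m B)
  right_nonempty : B.Nonempty
  middle_lt : ∀ t ∈ B, m < t ∧ π.2 m < π.2 t

theorem not_isSumInterval_one (A B : Set (Fin one.1)) : ¬IsSumInterval one A B := fun h ↦ by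
  obtain ⟨s, hs⟩ := h.left_nonempty
  obtain ⟨t, ht⟩ := h.right_nonempty
  exact (h.lt s hs t ht).1.ne (Subsingleton.elim (α := Fin 1) s t)

theorem IsSumInterval.preimage {A B : Set (Fin π.1)} (h : IsSumInterval π A B)
    {f : Fin σ.1 → Fin π.1} (hf : IsEmbedding σ π f) (hA : (f ⁻¹' A).Nonempty)
    (hB : (f ⁻¹' B).Nonempty) : IsSumInterval σ (f ⁻¹' A) (f ⁻¹' B) where
  isInterval := h.isInterval.preimage hf
  left_nonempty := hA
  right_nonempty := hB
  lt s hs t ht := (h.lt _ hs _ ht).imp hf.1.lt_iff_lt.1 (hf.2 s t).2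

theorem IsSumInterval.image {A B : Set (Fin σ.1)} (h : IsSumInterval σ A B)
    {f : Fin σ.1 → Fin π.1} (hf : IsEmbedding σ π f) (hrange : IsInterval π (Set.range f)) :
    IsSumInterval π (f '' A) (f '' B) where
  isInterval := Set.image_union f A B ▸ h.isInterval.image hf hrange
  left_nonempty := h.left_nonempty.image f
  right_nonempty := h.right_nonempty.image f
  lt := by
    rintro _ ⟨s, hs, rfl⟩ _ ⟨t, ht, rfl⟩
    exact (h.lt s hs t ht).imp (hf.1 ·) (hf.2 s t).1

theorem IsSumOneSumInterval.preimage {A B : Set (Fin π.1)} {f : Fin σ.1 → Fin π.1} {m : Fin σ.1}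
    (h : IsSumOneSumInterval π A (f m) B) (hf : IsEmbedding σ π f) (hA : (f ⁻¹' A).Nonempty)
    (hB : (f ⁻¹' B).Nonempty) : IsSumOneSumInterval σ (f ⁻¹' A) m (f ⁻¹' B) where
  isSumInterval := by
    have hinsert : f ⁻¹' insert (f m) B = insert m (f ⁻¹' B) := by
      ext
      simp [hf.1.injective.eq_iff]
    exact hinsert ▸ h.isSumInterval.preimage hf hA ⟨m, Set.mem_insert _ _⟩
  right_nonempty := hB
  middle_lt t ht := (h.middle_lt _ ht).imp hf.1.lt_iff_lt.1 (hf.2 m t).2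

theorem IsSumOneSumInterval.image {A B : Set (Fin σ.1)} {m : Fin σ.1}
    (h : IsSumOneSumInterval σ A m B) {f : Fin σ.1 → Fin π.1} (hf : IsEmbedding σ π f)
    (hrange : IsInterval π (Set.range f)) : IsSumOneSumInterval π (f '' A) (f m) (f '' B) where
  isSumInterval := Set.image_insert_eq ▸ h.isSumInterval.image hf hrange
  right_nonempty := h.right_nonempty.image f
  middle_lt := by
    rintro _ ⟨t, ht, rfl⟩
    exact (h.middle_lt t ht).imp (hf.1 ·) (hf.2 m t).1

theorem IsSumOneSumInterval.sameSide_left {A B : Set (Fin π.1)} {m x c : Fin π.1}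
    (h : IsSumOneSumInterval π A m B) (hc : c ∈ A) (hxm : x ≠ m) (hxA : x ∉ A) :
    SameSide π x m c := by
  have hcm := h.isSumInterval.lt c hc m (Set.mem_insert _ _)
  by_cases hxB : x ∈ B
  · have hmx := h.middle_lt x hxB
    simp only [SameSide]
    grind
  · exact h.isSumInterval.isInterval x (by simp [hxm, hxA, hxB]) m (by simp) c (by simp [hc])

theorem IsSumOneSumInterval.sameSide_right {A B : Set (Fin π.1)} {m x c : Fin π.1}
    (h : IsSumOneSumInterval π A m B) (hc : c ∈ B) (hxm : x ≠ m) (hxB : x ∉ B) :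
    SameSide π x m c := by
  have hmc := h.middle_lt c hc
  by_cases hxA : x ∈ A
  · have hxm' := h.isSumInterval.lt x hxA m (Set.mem_insert _ _)
    simp only [SameSide]
    grind
  · exact h.isSumInterval.isInterval x (by simp [hxm, hxA, hxB]) m (by simp) c (by simp [hc])

theorem IsSumOneSumInterval.le_or_exists_of_le {A B : Set (Fin π.1)} {m : Fin π.1}
    (h : IsSumOneSumInterval π A m B) {g : Fin ρ.1 → Fin π.1} (hg : IsEmbedding ρ π g)
    (hrange : Set.range g = {m}ᶜ) (hτ : Le τ π) :
    Le τ ρ ∨ ∃ A' m' B', IsSumOneSumInterval τ A' m' B' := by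
  obtain ⟨f, hf : IsEmbedding τ π f⟩ := hτ
  obtain ⟨a, ha⟩ := h.isSumInterval.left_nonempty
  obtain ⟨b, hb⟩ := h.right_nonempty
  by_cases hm : m ∉ Set.range f
  · exact Or.inl (hf.le_of_range_subset hg (hrange ▸ Set.subset_compl_singleton_iff.2 hm))
  rcases (f ⁻¹' A).eq_empty_or_nonempty with hA | hA
  · have ham : a ≠ m := (h.isSumInterval.lt a ha m (Set.mem_insert _ _)).1.ne
    exact Or.inl <| hf.le_of_exchange ham (fun x hx ↦
      h.sameSide_left ha hx (Set.eq_empty_iff_forall_notMem.1 hA x)) hg hrange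
  rcases (f ⁻¹' B).eq_empty_or_nonempty with hB | hB
  · have hbm : b ≠ m := (h.middle_lt b hb).1.ne'
    exact Or.inl <| hf.le_of_exchange hbm (fun x hx ↦
      h.sameSide_right hb hx (Set.eq_empty_iff_forall_notMem.1 hB x)) hg hrange
  obtain ⟨x, rfl⟩ := not_not.1 hm
  exact Or.inr ⟨_, x, _, h.preimage hf hA hB⟩

/-! ### Vanishing of the Möbius function -/

theorem IsSumOneSumInterval.exists_lt_forall_le_or_exists {A B : Set (Fin π.1)} {m : Fin π.1}
    (h : IsSumOneSumInterval π A m B) :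
    ∃ ρ < π, (∃ A' B', IsSumInterval ρ A' B') ∧
      ∀ τ ≤ π, τ ≤ ρ ∨ ∃ A' m' B', IsSumOneSumInterval τ A' m' B' := by
  obtain ⟨ρ, g, hg, hrange⟩ := exists_isEmbedding_range_eq π {m}ᶜ
  rw [Finset.coe_compl, Finset.coe_singleton] at hrange
  refine ⟨ρ, lt_of_le_of_ne ⟨g, hg⟩ ?_, ⟨g ⁻¹' A, g ⁻¹' insert m B, ?_⟩,
    fun τ ↦ h.le_or_exists_of_le hg hrange⟩
  · rintro rfl
    have hm : m ∈ Set.range g := Finite.surjective_of_injective hg.1.injective m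
    simp [hrange] at hm
  · obtain ⟨a, ha⟩ := h.isSumInterval.left_nonempty
    obtain ⟨b, hb⟩ := h.right_nonempty
    obtain ⟨x, rfl⟩ : a ∈ Set.range g :=
      hrange ▸ (h.isSumInterval.lt a ha m (Set.mem_insert _ _)).1.ne
    obtain ⟨y, rfl⟩ : b ∈ Set.range g := hrange ▸ (h.middle_lt b hb).1.ne'
    exact h.isSumInterval.preimage hg ⟨x, ha⟩ ⟨y, Set.mem_insert_of_mem _ hb⟩

theorem IsSumOneSumInterval.mu_eq_zero (hσ : ∀ A B, ¬IsSumInterval σ A B) {π : PPerm}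
    {A B : Set (Fin π.1)} {m : Fin π.1} (h : IsSumOneSumInterval π A m B) : mu σ π = 0 := by
  obtain ⟨ρ, hρπ, ⟨A', B', hρ⟩, hτ⟩ := h.exists_lt_forall_le_or_exists
  rw [mu_eq_incidenceAlgebra_mu]
  by_cases hσπ : σ ≤ π
  swap
  · exact IncidenceAlgebra.apply_eq_zero_of_not_le hσπ _
  have hσρ : σ < ρ := by
    refine lt_of_le_of_ne ((hτ σ hσπ).resolve_right ?_) (by rintro rfl; exact hσ _ _ hρ)
    exact fun ⟨_, _, _, hsum⟩ ↦ hσ _ _ hsum.isSumInterval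
  refine incidenceAlgebra_mu_eq_zero_of_lt hσρ hρπ fun τ _ hτπ hτρ ↦ ?_
  obtain ⟨_, _, _, hsum⟩ := (hτ τ hτπ.le).resolve_left hτρ
  rw [← mu_eq_incidenceAlgebra_mu, hsum.mu_eq_zero hσ]
termination_by π.1
decreasing_by exact length_lt_of_lt hτπ

/-! ### Direct sums -/

theorem castAdd_lt_natAdd {m n : ℕ} (i : Fin m) (j : Fin n) : Fin.castAdd n i < Fin.natAdd m j :=
  i.is_lt.trans_le (Nat.le_add_right m j)

theorem range_castAdd_union_range_natAdd (m n : ℕ) :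
    Set.range (Fin.castAdd n) ∪ Set.range (Fin.natAdd m) = (Set.univ : Set (Fin (m + n))) :=
  Set.eq_univ_of_forall <| Fin.addCases (fun i ↦ Or.inl ⟨i, rfl⟩) fun j ↦ Or.inr ⟨j, rfl⟩

section

variable (α β : PPerm)

theorem dsum_castAdd (s : Fin α.1) :
    (dsum α β).2 (Fin.castAdd β.1 s) = Fin.castAdd β.1 (α.2 s) :=
  congrArg (fun x ↦ finSumFinEquiv (Sum.map α.2 β.2 x)) (finSumFinEquiv_symm_apply_castAdd s)

theorem dsum_natAdd (t : Fin β.1) :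
    (dsum α β).2 (Fin.natAdd α.1 t) = Fin.natAdd α.1 (β.2 t) :=
  congrArg (fun x ↦ finSumFinEquiv (Sum.map α.2 β.2 x)) (finSumFinEquiv_symm_apply_natAdd t)

theorem isEmbedding_natAdd_dsum : IsEmbedding β (dsum α β) (Fin.natAdd α.1) :=
  ⟨Fin.strictMono_natAdd α.1, fun a b ↦ by
    rw [dsum_natAdd, dsum_natAdd]
    exact (Fin.natAdd_lt_natAdd_iff α.1).symm⟩

variable {α β}

theorem isSumInterval_dsum (hα : 0 < α.1) (hβ : 0 < β.1) :
    IsSumInterval (dsum α β) (Set.range (Fin.castAdd β.1)) (Set.range (Fin.natAdd α.1)) where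
  isInterval := (range_castAdd_union_range_natAdd α.1 β.1).symm ▸ isInterval_univ
  left_nonempty := ⟨_, ⟨0, hα⟩, rfl⟩
  right_nonempty := ⟨_, ⟨0, hβ⟩, rfl⟩
  lt := by
    rintro _ ⟨s, rfl⟩ _ ⟨t, rfl⟩
    rw [dsum_castAdd, dsum_natAdd]
    exact ⟨castAdd_lt_natAdd s t, castAdd_lt_natAdd (α.2 s) (β.2 t)⟩

theorem isSumOneSumInterval_dsum (hα : 0 < α.1) (hβ : 0 < β.1) :
    IsSumOneSumInterval (dsum α (dsum one β)) (Set.range (Fin.castAdd (1 + β.1)))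
      (Fin.natAdd α.1 (Fin.castAdd β.1 (0 : Fin 1)))
      (Fin.natAdd α.1 '' Set.range (Fin.natAdd 1)) where
  isSumInterval := by
    have hinsert : Set.range (Fin.natAdd α.1 : Fin (1 + β.1) → Fin (α.1 + (1 + β.1))) =
        insert (Fin.natAdd α.1 (Fin.castAdd β.1 0))
          (Fin.natAdd α.1 '' Set.range (Fin.natAdd 1)) := by
      rw [← Set.image_univ, ← range_castAdd_union_range_natAdd, Set.image_union, Set.range_unique,
        Set.image_singleton, Set.singleton_union]
      rfl
    exact hinsert ▸ isSumInterval_dsum (β := dsum one β) hα (Nat.add_pos_left one_pos β.1)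
  right_nonempty := ⟨_, _, ⟨⟨0, hβ⟩, rfl⟩, rfl⟩
  middle_lt := by
    rintro _ ⟨t, ht, rfl⟩
    have hone := (isSumInterval_dsum (α := one) one_pos hβ).lt _ ⟨(0 : Fin 1), rfl⟩ t ht
    have hnat := isEmbedding_natAdd_dsum α (dsum one β)
    exact hone.imp (hnat.1 ·) (hnat.2 _ _).1

end

end PPerm

/-! ### Interval copies of `α ⊕ 1 ⊕ β` -/

theorem mem_range_iff_of_injective_of_bounds {k n v : ℕ} {f : Fin k → Fin n}
    (hf : Function.Injective f) (h : ∀ a, v ≤ (f a : ℕ) ∧ (f a : ℕ) < v + k) {x : Fin n} :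
    x ∈ Set.range f ↔ v ≤ (x : ℕ) ∧ (x : ℕ) < v + k := by
  have himage : Finset.univ.image (fun a ↦ (f a : ℕ)) = Finset.Ico v (v + k) := by
    refine Finset.eq_of_subset_of_card_le (Finset.image_subset_iff.2 fun a _ ↦ ?_) ?_
    · exact Finset.mem_Ico.2 (h a)
    · rw [Finset.card_image_of_injective (f := fun a ↦ (f a : ℕ)) _
        (Fin.val_injective.comp hf), Nat.card_Ico, Finset.card_fin, Nat.add_sub_cancel_left]
  rw [← Finset.mem_Ico, ← himage]
  simp [Fin.ext_iff]

theorem HasIntervalCopy.exists_isEmbedding {π τ : PPerm} (h : HasIntervalCopy π τ) :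
    ∃ f, PPerm.IsEmbedding τ π f ∧ PPerm.IsInterval π (Set.range f) := by
  obtain ⟨f, i, v, hpos, hval, hlt⟩ := h
  have hmono : StrictMono f := fun a b hab ↦ by
    rw [Fin.lt_def, hpos, hpos]
    exact Nat.add_lt_add_left hab i
  refine ⟨f, ⟨hmono, hlt⟩, ?_⟩
  rintro x hx _ ⟨s, rfl⟩ _ ⟨t, rfl⟩
  have hbounds : ∀ a, i ≤ (f a : ℕ) ∧ (f a : ℕ) < i + τ.1 := fun a ↦ by
    rw [hpos]
    omega
  have hxpos : ¬(i ≤ (x : ℕ) ∧ (x : ℕ) < i + τ.1) := fun hx' ↦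
    hx ((mem_range_iff_of_injective_of_bounds hmono.injective hbounds).2 hx')
  have hxval : ¬(v ≤ (π.2 x : ℕ) ∧ (π.2 x : ℕ) < v + τ.1) := fun hx' ↦ hx <| by
    obtain ⟨a, ha⟩ := (mem_range_iff_of_injective_of_bounds
      (π.2.injective.comp hmono.injective) hval).2 hx'
    exact ⟨a, π.2.injective ha⟩
  have hs := And.intro (hbounds s) (hval s)
  have ht := And.intro (hbounds t) (hval t)
  simp only [PPerm.SameSide, Fin.lt_def]
  omega

theorem sum_one_sum_isAnnihilator_general {α β σ π : PPerm} (hα : 0 < α.1) (hβ : 0 < β.1)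
    (hσ : ∀ A B, ¬PPerm.IsSumInterval σ A B)
    (h : HasIntervalCopy π (PPerm.dsum α (PPerm.dsum PPerm.one β))) : mu σ π = 0 := by
  obtain ⟨f, hf, hrange⟩ := h.exists_isEmbedding
  exact ((PPerm.isSumOneSumInterval_dsum hα hβ).image hf hrange).mu_eq_zero hσ

/-- **(Corollary `cor-sum`.)**  For any nonempty permutations `α` and `β`,
the permutation `α ⊕ 1 ⊕ β` is an annihilator: every permutation `π`
containing an interval copy of `α ⊕ 1 ⊕ β` satisfies `μ(1,π) = 0`. -/
theorem sum_one_sum_isAnnihilator (α β : PPerm) (hα : 0 < α.1) (hβ : 0 < β.1)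
    (π : PPerm) (h : HasIntervalCopy π (PPerm.dsum α (PPerm.dsum PPerm.one β))) :
    mu PPerm.one π = 0 := by
  exact sum_one_sum_isAnnihilator_general hα hβ PPerm.not_isSumInterval_one h
end

section
/- For n ≥ 1, let Z′(n) be the proportion among all n! permutations of length n of those permutations that contain at least two adjacencies but do not have opposing adjacencies (i.e. all of their adjacencies are of the same type). Then liminf_{n→∞} Z′(n) ≥ 0.1944. -/
/-!
The permutation pattern poset and its Möbius function.

A permutation of length `n` is represented as an element of the symmetric
group on `Fin n`; the collection of all permutations of all lengths is the
sigma type `PPerm`.  Pattern containment `PPerm.Le` makes `PPerm` into the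
permutation pattern poset, and `mu` is its Möbius function, defined by the
usual recursion `μ(σ,σ) = 1`, `μ(σ,π) = -∑_{σ ≤ λ < π} μ(σ,λ)` for `σ < π`
and `μ(σ,π) = 0` otherwise.
-/

open scoped Classical

/-- `π` has an up-adjacency: consecutive positions `i, i+1` with
`π(i+1) = π(i) + 1`. -/
def HasUpAdj (π : PPerm) : Prop :=
  ∃ i j : Fin π.1, (j : ℕ) = (i : ℕ) + 1 ∧ (π.2 j : ℕ) = (π.2 i : ℕ) + 1

/-- `π` has a down-adjacency: consecutive positions `i, i+1` with
`π(i+1) = π(i) - 1`. -/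
def HasDownAdj (π : PPerm) : Prop :=
  ∃ i j : Fin π.1, (j : ℕ) = (i : ℕ) + 1 ∧ (π.2 i : ℕ) = (π.2 j : ℕ) + 1

/-- Position `i` starts an adjacency of `π`: `|π(i+1) − π(i)| = 1`. -/
def AdjAtPos (π : PPerm) (i : Fin π.1) : Prop :=
  ∃ j : Fin π.1, (j : ℕ) = (i : ℕ) + 1 ∧
    ((π.2 j : ℕ) = (π.2 i : ℕ) + 1 ∨ (π.2 i : ℕ) = (π.2 j : ℕ) + 1)

/-- `Z′(n)`: the proportion, among all `n!` permutations of length `n`, of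
those having at least two adjacencies but no opposing adjacencies. -/
noncomputable def nonOpposingDensity (n : ℕ) : ℝ :=
  ((Finset.univ.filter fun p : Equiv.Perm (Fin n) =>
      2 ≤ (Finset.univ.filter fun i : Fin n => AdjAtPos ⟨n, p⟩ i).card ∧
        ¬ (HasUpAdj ⟨n, p⟩ ∧ HasDownAdj ⟨n, p⟩)).card : ℝ) / (Nat.factorial n : ℝ)

/-!
Inflating an entry of a permutation of length `n` by the pattern `12` creates one up-adjacency,
keeps the others, and changes the number of down-adjacencies for at most `2 D` of the `n` entries.
As every pair of a permutation of length `n + 1` and one of its up-adjacencies arises exactly once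
in this way, the numbers `U` and `D` of up- and down-adjacencies of a uniformly random permutation
satisfy `E_{n+1}[U f(U - 1, D)] = E_n[f(U, D)] + O(1 / n)`, an asymptotic form of the identity
`E[U f(U - 1)] = E[f(U)]` that characterises the Poisson distribution of mean `1`. By induction on
`k`, the factorial moments `E[C(U, k) g(D)]` tend to `lim E[g(D)] / k!`, so `(U, D)` converges in
law to a pair of independent Poisson variables of mean `1`. Therefore the density tends to
`2 P(U = 0) P(D ≥ 2) = 2 e⁻¹ (1 - 2 e⁻¹) = 0.19445…`.
-/

open Filter Finset Topology
open Equiv (Perm)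
open scoped BigOperators Nat

section Inflation

variable {n : ℕ}

/-- Position `i` starts an up-adjacency of `p`. -/
def IsUpAdjAt (p : Perm (Fin n)) (i : Fin n) : Prop :=
  ∃ j : Fin n, (j : ℕ) = i + 1 ∧ (p j : ℕ) = p i + 1

/-- Position `i` starts a down-adjacency of `p`. -/
def IsDownAdjAt (p : Perm (Fin n)) (i : Fin n) : Prop :=
  ∃ j : Fin n, (j : ℕ) = i + 1 ∧ (p i : ℕ) = p j + 1

/-- The number of up-adjacencies of a permutation. -/
noncomputable def numUpAdj (p : Perm (Fin n)) : ℕ := #{i | IsUpAdjAt p i}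

/-- The number of down-adjacencies of a permutation. -/
noncomputable def numDownAdj (p : Perm (Fin n)) : ℕ := #{i | IsDownAdjAt p i}

/-- The inflation of the `i`-th entry of `p` by the pattern `12`: the entry `v = p i` is replaced
by two consecutive entries `v, v + 1`, and the entries above `v` are raised by one. -/
def inflateUp (p : Perm (Fin n)) (i : Fin n) : Perm (Fin (n + 1)) :=
  (finSuccEquiv' i.succ).trans (p.optionCongr.trans (finSuccEquiv' (p i).succ).symm)

@[simp]
lemma inflateUp_succ (p : Perm (Fin n)) (i : Fin n) : inflateUp p i i.succ = (p i).succ := by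
  simp [inflateUp]

@[simp]
lemma inflateUp_succ_succAbove (p : Perm (Fin n)) (i k : Fin n) :
    inflateUp p i (i.succ.succAbove k) = (p i).succ.succAbove (p k) := by
  simp [inflateUp]

lemma succ_succAbove_of_ne {i k : Fin n} (h : k ≠ i) :
    i.succ.succAbove k = i.castSucc.succAbove k := by
  grind [Fin.succAbove]

@[simp]
lemma inflateUp_castSucc_succAbove (p : Perm (Fin n)) (i k : Fin n) :
    inflateUp p i (i.castSucc.succAbove k) = (p i).castSucc.succAbove (p k) := by
  rcases eq_or_ne k i with rfl | h
  · simp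
  · rw [← succ_succAbove_of_ne h, inflateUp_succ_succAbove,
      succ_succAbove_of_ne (p.injective.ne h)]

@[simp]
lemma inflateUp_castSucc (p : Perm (Fin n)) (i : Fin n) :
    inflateUp p i i.castSucc = (p i).castSucc := by
  simpa using inflateUp_succ_succAbove p i i

lemma val_succ_succAbove_eq_val_castSucc_succAbove_add_one {v x y : Fin n} :
    (v.succ.succAbove y : ℕ) = v.castSucc.succAbove x + 1 ↔ (y : ℕ) = x + 1 := by
  grind [Fin.succAbove]

lemma val_castSucc_succAbove_eq_val_succ_succAbove_add_one {v x y : Fin n} (h : x ≠ y) :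
    (v.castSucc.succAbove x : ℕ) = v.succ.succAbove y + 1 ↔ (x : ℕ) = y + 1 ∧ x ≠ v ∧ y ≠ v := by
  grind [Fin.succAbove]

lemma exists_eq_castSucc_succAbove_add_one_and_iff {i k : Fin n} {P : Fin (n + 1) → Prop} :
    (∃ b : Fin (n + 1), (b : ℕ) = i.castSucc.succAbove k + 1 ∧ P b) ↔
      ∃ l : Fin n, (l : ℕ) = k + 1 ∧ P (i.succ.succAbove l) := by
  have hne : (i.succ : ℕ) ≠ i.castSucc.succAbove k + 1 := fun h ↦
    Fin.succAbove_ne i.castSucc k (Fin.ext (Nat.succ_injective h.symm))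
  simp only [Fin.exists_iff_succAbove i.succ, hne, false_and, false_or,
    val_succ_succAbove_eq_val_castSucc_succAbove_add_one]

lemma isUpAdjAt_inflateUp_castSucc (p : Perm (Fin n)) (i : Fin n) :
    IsUpAdjAt (inflateUp p i) i.castSucc :=
  ⟨i.succ, by simp⟩

lemma isUpAdjAt_inflateUp_succAbove {p : Perm (Fin n)} {i k : Fin n} :
    IsUpAdjAt (inflateUp p i) (i.castSucc.succAbove k) ↔ IsUpAdjAt p k := by
  simp only [IsUpAdjAt, exists_eq_castSucc_succAbove_add_one_and_iff, inflateUp_succ_succAbove,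
    inflateUp_castSucc_succAbove, val_succ_succAbove_eq_val_castSucc_succAbove_add_one]

lemma not_isDownAdjAt_inflateUp_castSucc (p : Perm (Fin n)) (i : Fin n) :
    ¬ IsDownAdjAt (inflateUp p i) i.castSucc := by
  rintro ⟨j, hj, hv⟩
  obtain rfl : j = i.succ := Fin.ext (by simpa using hj)
  simp only [inflateUp_castSucc, inflateUp_succ, Fin.val_castSucc, Fin.val_succ] at hv
  omega

lemma isDownAdjAt_inflateUp_succAbove {p : Perm (Fin n)} {i k : Fin n} :
    IsDownAdjAt (inflateUp p i) (i.castSucc.succAbove k) ↔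
      IsDownAdjAt p k ∧ k ≠ i ∧ (k : ℕ) + 1 ≠ i := by
  have key (l : Fin n) (hl : (l : ℕ) = k + 1) :
      ((p i).castSucc.succAbove (p k) : ℕ) = (p i).succ.succAbove (p l) + 1 ↔
        (p k : ℕ) = p l + 1 ∧ k ≠ i ∧ (k : ℕ) + 1 ≠ i := by
    have hkl : k ≠ l := fun h ↦ by simp [h] at hl
    rw [val_castSucc_succAbove_eq_val_succ_succAbove_add_one (p.injective.ne hkl),
      p.injective.ne_iff, p.injective.ne_iff, ← hl, Fin.val_ne_iff]
  simp only [IsDownAdjAt, exists_eq_castSucc_succAbove_add_one_and_iff, inflateUp_succ_succAbove,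
    inflateUp_castSucc_succAbove]
  grind

lemma numUpAdj_inflateUp (p : Perm (Fin n)) (i : Fin n) :
    numUpAdj (inflateUp p i) = numUpAdj p + 1 := by
  simp only [numUpAdj, card_filter, Fin.sum_univ_succAbove _ i.castSucc,
    isUpAdjAt_inflateUp_castSucc, isUpAdjAt_inflateUp_succAbove, if_true, add_comm]

lemma numDownAdj_inflateUp (p : Perm (Fin n)) (i : Fin n) :
    numDownAdj (inflateUp p i) = #{k | IsDownAdjAt p k ∧ k ≠ i ∧ (k : ℕ) + 1 ≠ i} := by
  simp only [numDownAdj, card_filter, Fin.sum_univ_succAbove _ i.castSucc,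
    not_isDownAdjAt_inflateUp_castSucc, isDownAdjAt_inflateUp_succAbove, if_false, zero_add]

lemma numDownAdj_inflateUp_le (p : Perm (Fin n)) (i : Fin n) :
    numDownAdj (inflateUp p i) ≤ numDownAdj p := by
  rw [numDownAdj_inflateUp]
  exact card_le_card (monotone_filter_right _ fun _ _ h ↦ h.1)

lemma card_numDownAdj_inflateUp_ne_le (p : Perm (Fin n)) :
    #{i | numDownAdj (inflateUp p i) ≠ numDownAdj p} ≤ 2 * numDownAdj p := by
  have hsub : ({i | numDownAdj (inflateUp p i) ≠ numDownAdj p} : Finset (Fin n)) ⊆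
      ({k | IsDownAdjAt p k} : Finset (Fin n)).biUnion fun k ↦ {i | k = i ∨ (k : ℕ) + 1 = i} := by
    intro i hi
    contrapose! hi
    rw [mem_filter_univ, not_not, numDownAdj_inflateUp, numDownAdj]
    congr 1 with k
    simp only [mem_biUnion, mem_filter, mem_univ, true_and, not_exists, not_and, not_or, ne_eq,
      and_iff_left_iff_imp] at hi ⊢
    grind
  have hcard (k : Fin n) : #{i : Fin n | k = i ∨ (k : ℕ) + 1 = i} ≤ 2 := by
    refine (card_le_card_of_injOn Fin.val (t := {(k : ℕ), (k : ℕ) + 1}) ?_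
      Fin.val_injective.injOn).trans card_le_two
    intro i hi
    simp only [coe_filter, mem_univ, true_and, Set.mem_ofPred_eq, coe_insert, coe_singleton,
      Set.mem_insert_iff, Set.mem_singleton_iff] at hi ⊢
    grind
  grw [hsub, card_biUnion_le_card_mul _ _ 2 fun k _ ↦ hcard k, mul_comm, numDownAdj]

lemma inflateUp_injective (i : Fin n) :
    Function.Injective fun p : Perm (Fin n) ↦ inflateUp p i := by
  intro p q h
  have hi : p i = q i := by
    simpa using DFunLike.congr_fun h i.succ
  ext1 k
  simpa [hi] using DFunLike.congr_fun h (i.succ.succAbove k)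

lemma exists_inflateUp_eq {π : Perm (Fin (n + 1))} {i : Fin n} (h : IsUpAdjAt π i.castSucc) :
    ∃ p, inflateUp p i = π := by
  obtain ⟨j, hj, hv⟩ := h
  obtain rfl : j = i.succ := Fin.ext (by simpa using hj)
  obtain ⟨v, hv₀⟩ : ∃ v : Fin n, v.castSucc = π i.castSucc := ⟨⟨π i.castSucc, by omega⟩, rfl⟩
  have hv₁ : π i.succ = v.succ := Fin.ext (by simp [hv, ← hv₀])
  let e : Perm (Option (Fin n)) :=
    (finSuccEquiv' i.succ).symm.trans (π.trans (finSuccEquiv' v.succ))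
  have he : e none = none := by simp [e, hv₁]
  obtain ⟨p, hp⟩ : ∃ p : Perm (Fin n), p.optionCongr = e :=
    ⟨Equiv.removeNone e, by simp [he, ← Perm.one_def]⟩
  have hpi : p i = v := by
    have : e (some i) = some v := by
      simp [e, ← hv₀]
    simpa [← hp] using this
  refine ⟨p, ?_⟩
  rw [inflateUp, hp, hpi]
  ext a
  simp [e]

/-- Both sides count pairs of a permutation and one of its up-adjacencies, since contracting an
up-adjacency is inverse to inflating an entry. -/
lemma sum_numUpAdj_mul {R : Type*} [NonAssocSemiring R] (F : Perm (Fin (n + 1)) → R) :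
    ∑ π, (numUpAdj π : R) * F π = ∑ p : Perm (Fin n), ∑ i, F (inflateUp p i) := by
  have hlast (π : Perm (Fin (n + 1))) : ¬ IsUpAdjAt π (Fin.last n) := by
    rintro ⟨j, hj, -⟩
    simp only [Fin.val_last] at hj
    omega
  have hnum (π : Perm (Fin (n + 1))) :
      (numUpAdj π : R) * F π = ∑ i : Fin n, if IsUpAdjAt π i.castSucc then F π else 0 := by
    simp only [numUpAdj, card_filter, Fin.sum_univ_castSucc, hlast, if_false, add_zero,
      Nat.cast_sum, sum_mul, Nat.cast_ite, Nat.cast_one, Nat.cast_zero, ite_mul, one_mul, zero_mul]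
  simp only [hnum]
  rw [sum_comm, sum_comm (s := univ (α := Perm (Fin n)))]
  refine sum_congr rfl fun i _ ↦ (Fintype.sum_of_injective _ (inflateUp_injective i) _ _ ?_ ?_).symm
  · intro π hπ
    exact if_neg fun h ↦ hπ (exists_inflateUp_eq h)
  · exact fun p ↦ (if_pos (isUpAdjAt_inflateUp_castSucc p i)).symm

lemma isUpAdjAt_revPerm_mul {p : Perm (Fin n)} {i : Fin n} :
    IsUpAdjAt (Fin.revPerm * p) i ↔ IsDownAdjAt p i := by
  refine exists_congr fun j ↦ and_congr_right fun _ ↦ ?_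
  simp only [Perm.mul_apply, Fin.revPerm_apply, Fin.val_rev]
  omega

lemma numUpAdj_revPerm_mul (p : Perm (Fin n)) : numUpAdj (Fin.revPerm * p) = numDownAdj p := by
  simp only [numUpAdj, numDownAdj, isUpAdjAt_revPerm_mul]

lemma numDownAdj_revPerm_mul (p : Perm (Fin n)) : numDownAdj (Fin.revPerm * p) = numUpAdj p := by
  rw [← numUpAdj_revPerm_mul, ← mul_assoc]
  congr 1
  ext
  simp

end Inflation

section Mean

variable {n k : ℕ} {f g : ℕ → ℕ → ℝ}

/-- The expectation of `f U D`, where `U` and `D` are the numbers of up- and of down-adjacencies of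
a uniformly random permutation of length `n`. -/
noncomputable def adjMean (n : ℕ) (f : ℕ → ℕ → ℝ) : ℝ :=
  𝔼 p : Perm (Fin n), f (numUpAdj p) (numDownAdj p)

lemma adjMean_swap (n : ℕ) (f : ℕ → ℕ → ℝ) : adjMean n (fun u d ↦ f d u) = adjMean n f :=
  Fintype.expect_equiv (Equiv.mulLeft Fin.revPerm) _ _ fun p ↦ by
    simp only [Equiv.coe_mulLeft, numUpAdj_revPerm_mul, numDownAdj_revPerm_mul]

lemma adjMean_const (n : ℕ) (c : ℝ) : adjMean n (fun _ _ ↦ c) = c :=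
  Fintype.expect_const c

lemma adjMean_add (n : ℕ) (f g : ℕ → ℕ → ℝ) :
    adjMean n (fun u d ↦ f u d + g u d) = adjMean n f + adjMean n g :=
  expect_add_distrib _ _ _

lemma adjMean_sub (n : ℕ) (f g : ℕ → ℕ → ℝ) :
    adjMean n (fun u d ↦ f u d - g u d) = adjMean n f - adjMean n g :=
  expect_sub_distrib _ _ _

lemma adjMean_const_mul (n : ℕ) (c : ℝ) (f : ℕ → ℕ → ℝ) :
    adjMean n (fun u d ↦ c * f u d) = c * adjMean n f :=
  (mul_expect _ _ _).symm

lemma adjMean_mono (h : ∀ u d, f u d ≤ g u d) : adjMean n f ≤ adjMean n g :=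
  expect_le_expect fun _ _ ↦ h _ _

lemma abs_adjMean_le (h : ∀ u d, |f u d| ≤ g u d) : |adjMean n f| ≤ adjMean n g :=
  (abs_expect_le _ _).trans (adjMean_mono h)

lemma hasSum_adjMean {F : ℕ → ℕ → ℕ → ℝ} (h : ∀ u d, HasSum (fun j ↦ F j u d) (f u d)) :
    HasSum (fun j ↦ adjMean n (F j)) (adjMean n f) := by
  simp only [adjMean, Fintype.expect_eq_sum_div_card]
  exact (hasSum_sum fun p _ ↦ h (numUpAdj p) (numDownAdj p)).div_const _

lemma succ_mul_adjMean_succ (n : ℕ) (f : ℕ → ℕ → ℝ) :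
    (n + 1) * adjMean (n + 1) (fun u d ↦ u * f (u - 1) d) =
      𝔼 p : Perm (Fin n), ∑ i, f (numUpAdj p) (numDownAdj (inflateUp p i)) := by
  simp only [adjMean, Fintype.expect_eq_sum_div_card, sum_numUpAdj_mul, numUpAdj_inflateUp,
    Fintype.card_perm, Fintype.card_fin, Nat.factorial_succ, Nat.add_sub_cancel]
  push_cast
  field_simp

lemma mul_choose_pred (u k : ℕ) :
    (u * (u - 1).choose k : ℝ) = (k + 1) * u.choose (k + 1) := by
  cases u with
  | zero => simp
  | succ u => exact_mod_cast (Nat.add_one_mul_choose_eq u k).trans (mul_comm _ _)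

lemma succ_mul_adjMean_choose_succ_mul_le {h : ℕ → ℝ} (h_mono : Monotone h) (n k : ℕ) :
    (n + 1) * ((k + 1) * adjMean (n + 1) (fun u d ↦ u.choose (k + 1) * h d)) ≤
      n * adjMean n (fun u d ↦ u.choose k * h d) := by
  calc _ = 𝔼 p : Perm (Fin n), ∑ i, (numUpAdj p).choose k * h (numDownAdj (inflateUp p i)) := by
        rw [← succ_mul_adjMean_succ n fun u d ↦ u.choose k * h d, ← adjMean_const_mul]
        simp only [← mul_assoc, mul_choose_pred]
    _ ≤ 𝔼 p : Perm (Fin n), ∑ _i : Fin n, (numUpAdj p).choose k * h (numDownAdj p) := by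
        gcongr
        exact h_mono (numDownAdj_inflateUp_le _ _)
    _ = n * adjMean n (fun u d ↦ u.choose k * h d) := by
        simp [adjMean, mul_expect]

lemma adjMean_choose_mul_le {h : ℕ → ℝ} {M : ℝ} (h_nonneg : ∀ d, 0 ≤ h d) (h_mono : Monotone h)
    (hM : ∀ n, adjMean n (fun _ d ↦ h d) ≤ M) (n k : ℕ) :
    adjMean n (fun u d ↦ u.choose k * h d) ≤ M / k ! := by
  have hM_nonneg : 0 ≤ M := (expect_nonneg fun _ _ ↦ h_nonneg _).trans (hM 0)
  induction k generalizing n with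
  | zero => simpa using hM n
  | succ k ih =>
    cases n with
    | zero =>
      have hzero : adjMean 0 (fun u d ↦ u.choose (k + 1) * h d) = 0 := by simp [adjMean, numUpAdj]
      rw [hzero]
      positivity
    | succ n =>
      have hk : (k + 1) * adjMean (n + 1) (fun u d ↦ u.choose (k + 1) * h d) ≤ M / k ! := by
        refine le_of_mul_le_mul_left ?_ (n.cast_add_one_pos (α := ℝ))
        calc _ ≤ n * adjMean n (fun u d ↦ u.choose k * h d) :=
              succ_mul_adjMean_choose_succ_mul_le h_mono n k
          _ ≤ n * (M / k !) := by grw [ih n]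
          _ ≤ (n + 1) * (M / k !) := by gcongr; exact le_add_of_nonneg_right zero_le_one
      rwa [Nat.factorial_succ, Nat.cast_mul, mul_comm, ← div_div, le_div_iff₀' (by positivity),
        Nat.cast_add_one]

lemma adjMean_choose_le (n k : ℕ) : adjMean n (fun u _ ↦ u.choose k) ≤ 1 / k ! := by
  simpa using adjMean_choose_mul_le (h := fun _ ↦ 1) (fun _ ↦ zero_le_one) monotone_const
    (fun n ↦ (adjMean_const n 1).le) n k

lemma adjMean_down_le_one (n : ℕ) : adjMean n (fun _ d ↦ d) ≤ 1 := by
  simpa [adjMean_swap n fun u _ ↦ (u : ℝ)] using adjMean_choose_le n 1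

lemma adjMean_choose_mul_down_le (n k : ℕ) : adjMean n (fun u d ↦ u.choose k * d) ≤ 1 / k ! :=
  adjMean_choose_mul_le (fun d ↦ d.cast_nonneg) Nat.mono_cast adjMean_down_le_one n k

lemma abs_sum_inflateUp_sub_le (hf : ∀ u d, |f u d| ≤ u.choose k) (p : Perm (Fin n)) :
    |∑ i, f (numUpAdj p) (numDownAdj (inflateUp p i)) - n * f (numUpAdj p) (numDownAdj p)| ≤
      4 * ((numUpAdj p).choose k * numDownAdj p) := by
  set u := numUpAdj p
  set d := numDownAdj p
  calc _ = |∑ i, (f u (numDownAdj (inflateUp p i)) - f u d)| := by simp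
    _ ≤ ∑ i, |f u (numDownAdj (inflateUp p i)) - f u d| := abs_sum_le_sum_abs _ _
    _ ≤ ∑ i, if numDownAdj (inflateUp p i) ≠ d then 2 * (u.choose k : ℝ) else 0 := by
        gcongr
        split_ifs with h
        · grw [abs_sub, hf, hf, two_mul]
        · simp [not_not.1 h]
    _ = #{i | numDownAdj (inflateUp p i) ≠ d} * (2 * (u.choose k : ℝ)) := by
        rw [← sum_filter, sum_const, nsmul_eq_mul]
    _ ≤ (2 * d : ℕ) * (2 * (u.choose k : ℝ)) := by
        gcongr
        exact card_numDownAdj_inflateUp_ne_le p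
    _ = 4 * (u.choose k * d) := by
        push_cast
        ring

lemma abs_adjMean_succ_sub_adjMean_le (hf : ∀ u d, |f u d| ≤ u.choose k) (n : ℕ) :
    |adjMean (n + 1) (fun u d ↦ u * f (u - 1) d) - adjMean n f| ≤ 5 / (n + 1) := by
  have hk : (1 / k ! : ℝ) ≤ 1 := by
    simpa using Nat.cast_inv_le_one (k !)
  have hinfl : |(n + 1) * adjMean (n + 1) (fun u d ↦ u * f (u - 1) d) - n * adjMean n f| ≤ 4 := by
    calc _ ≤ adjMean n (fun u d ↦ 4 * (u.choose k * d)) := by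
          rw [succ_mul_adjMean_succ, ← adjMean_const_mul, adjMean, ← expect_sub_distrib]
          exact (abs_expect_le _ _).trans (expect_le_expect fun p _ ↦ abs_sum_inflateUp_sub_le hf p)
      _ ≤ 4 := by
          rw [adjMean_const_mul]
          linarith [adjMean_choose_mul_down_le n k]
  have hmean : |adjMean n f| ≤ 1 := (abs_adjMean_le hf).trans ((adjMean_choose_le n k).trans hk)
  rw [le_div_iff₀ (by positivity), ← abs_of_pos (a := (n + 1 : ℝ)) (by positivity), ← abs_mul]
  calc _ = |((n + 1) * adjMean (n + 1) (fun u d ↦ u * f (u - 1) d) - n * adjMean n f) -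
        adjMean n f| := by ring_nf
    _ ≤ 4 + 1 := (abs_sub _ _).trans (add_le_add hinfl hmean)
    _ = 5 := by norm_num

lemma tendsto_adjMean_succ_sub_adjMean (hf : ∀ u d, |f u d| ≤ u.choose k) :
    Tendsto (fun n ↦ adjMean (n + 1) (fun u d ↦ u * f (u - 1) d) - adjMean n f) atTop (𝓝 0) := by
  refine squeeze_zero_norm (abs_adjMean_succ_sub_adjMean_le hf) ?_
  simpa [div_eq_mul_inv] using (tendsto_one_div_add_atTop_nhds_zero_nat (𝕜 := ℝ)).const_mul 5

end Mean

section PoissonLimit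

variable {f : ℕ → ℕ → ℝ} {g : ℕ → ℝ} {L : ℝ}

lemma tendsto_adjMean_mul_of_shift (hf : ∀ k u, |f k u| ≤ u.choose k)
    (hshift : ∀ k u, u * f k (u - 1) = (k + 1) * f (k + 1) u) (hg : ∀ d, |g d| ≤ 1)
    (hL : Tendsto (fun n ↦ adjMean n fun u d ↦ f 0 u * g d) atTop (𝓝 L)) (k : ℕ) :
    Tendsto (fun n ↦ adjMean n fun u d ↦ f k u * g d) atTop (𝓝 (L / k !)) := by
  induction k with
  | zero => simpa using hL
  | succ k ih =>
    have hfg (u d : ℕ) : |f k u * g d| ≤ u.choose k := by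
      grw [abs_mul, hf, hg, mul_one]
    have h := ((tendsto_adjMean_succ_sub_adjMean hfg).add ih).div_const (k + 1 : ℝ)
    rw [← tendsto_add_atTop_iff_nat 1, Nat.factorial_succ]
    convert h using 2 with n
    · simp only [← mul_assoc, hshift, sub_add_cancel]
      simp only [mul_assoc, adjMean_const_mul]
      field_simp
    · push_cast
      field_simp
      simp

lemma tendsto_adjMean_choose_mul (hg : ∀ d, |g d| ≤ 1)
    (hL : Tendsto (fun n ↦ adjMean n fun _ d ↦ g d) atTop (𝓝 L)) (k : ℕ) :
    Tendsto (fun n ↦ adjMean n fun u d ↦ u.choose k * g d) atTop (𝓝 (L / k !)) :=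
  tendsto_adjMean_mul_of_shift (f := fun k u ↦ u.choose k) (by simp)
    (fun k u ↦ mul_choose_pred u k) hg (by simpa using hL) k

lemma hasSum_neg_one_pow_mul_choose (u : ℕ) :
    HasSum (fun k ↦ (-1 : ℝ) ^ k * u.choose k) (if u = 0 then 1 else 0) := by
  have h : ∑ k ∈ range (u + 1), (-1 : ℝ) ^ k * u.choose k = if u = 0 then 1 else 0 :=
    mod_cast Int.alternating_sum_range_choose (n := u)
  rw [← h]
  refine hasSum_sum_of_ne_finset_zero fun k hk ↦ ?_
  rw [Nat.choose_eq_zero_of_lt (by simpa using hk), Nat.cast_zero, mul_zero]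

lemma tendsto_adjMean_up_eq_zero (hg : ∀ d, |g d| ≤ 1)
    (hL : Tendsto (fun n ↦ adjMean n fun _ d ↦ g d) atTop (𝓝 L)) :
    Tendsto (fun n ↦ adjMean n fun u d ↦ (if u = 0 then 1 else 0) * g d) atTop
      (𝓝 (Real.exp (-1) * L)) := by
  have hsum (n : ℕ) : HasSum (fun k ↦ adjMean n fun u d ↦ (-1) ^ k * (u.choose k * g d))
      (adjMean n fun u d ↦ (if u = 0 then 1 else 0) * g d) := by
    refine hasSum_adjMean fun u d ↦ ?_
    simpa only [mul_assoc] using (hasSum_neg_one_pow_mul_choose u).mul_right (g d)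
  have hexp : Real.exp (-1) * L = ∑' k : ℕ, (-1) ^ k * (L / k !) := by
    rw [Real.exp_eq_exp_ℝ, NormedSpace.exp_eq_tsum_div, ← tsum_mul_right]
    exact tsum_congr fun k ↦ by ring
  have hbound (n k : ℕ) : ‖adjMean n fun u d ↦ (-1) ^ k * (u.choose k * g d)‖ ≤ 1 / k ! := by
    refine (abs_adjMean_le fun u d ↦ ?_).trans (adjMean_choose_le n k)
    grw [abs_mul, abs_neg_one_pow, one_mul, abs_mul, hg, mul_one, Nat.abs_cast]
  have hsummable : Summable fun k : ℕ ↦ (1 / k ! : ℝ) := by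
    simpa using Real.summable_pow_div_factorial 1
  rw [hexp]
  simp only [← (hsum _).tsum_eq]
  refine tendsto_tsum_of_dominated_convergence hsummable (fun k ↦ ?_) (.of_forall hbound)
  simpa only [adjMean_const_mul] using (tendsto_adjMean_choose_mul hg hL k).const_mul _

lemma tendsto_adjMean_up_eq (hg : ∀ d, |g d| ≤ 1)
    (hL : Tendsto (fun n ↦ adjMean n fun _ d ↦ g d) atTop (𝓝 L)) (k : ℕ) :
    Tendsto (fun n ↦ adjMean n fun u d ↦ (if u = k then 1 else 0) * g d) atTop
      (𝓝 (Real.exp (-1) * L / k !)) := by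
  refine tendsto_adjMean_mul_of_shift (f := fun k u ↦ if u = k then 1 else 0) (fun k u ↦ ?_)
    (fun k u ↦ ?_) hg (tendsto_adjMean_up_eq_zero hg hL) k
  · split_ifs with h <;> simp [h]
  · cases u <;> simp +contextual

lemma tendsto_adjMean_up_eq_one (k : ℕ) :
    Tendsto (fun n ↦ adjMean n fun u _ ↦ if u = k then 1 else 0) atTop
      (𝓝 (Real.exp (-1) / k !)) := by
  simpa using tendsto_adjMean_up_eq (g := fun _ ↦ 1) (L := 1) (by simp) (by simp [adjMean_const]) k

lemma tendsto_adjMean_up_eq_and_down_eq (j k : ℕ) :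
    Tendsto (fun n ↦ adjMean n fun u d ↦ (if u = j then 1 else 0) * if d = k then 1 else 0) atTop
      (𝓝 ((Real.exp (-1) / j !) * (Real.exp (-1) / k !))) := by
  have hdown : Tendsto (fun n ↦ adjMean n fun _ d ↦ if d = k then 1 else 0) atTop
      (𝓝 (Real.exp (-1) / k !)) := by
    simpa only [adjMean_swap _ fun u _ ↦ if u = k then (1 : ℝ) else 0]
      using tendsto_adjMean_up_eq_one k
  rw [div_mul_eq_mul_div]
  refine tendsto_adjMean_up_eq (fun d ↦ ?_) hdown j
  split_ifs <;> simp

end PoissonLimit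

section NonOpposing

variable {n : ℕ}

lemma adjAtPos_iff {p : Perm (Fin n)} {i : Fin n} :
    AdjAtPos ⟨n, p⟩ i ↔ IsUpAdjAt p i ∨ IsDownAdjAt p i := by
  simp only [AdjAtPos, IsUpAdjAt, IsDownAdjAt, and_or_left, exists_or]

lemma hasUpAdj_iff {p : Perm (Fin n)} : HasUpAdj ⟨n, p⟩ ↔ numUpAdj p ≠ 0 := by
  rw [numUpAdj, card_ne_zero, filter_nonempty_iff]
  simp only [mem_univ, true_and, HasUpAdj, IsUpAdjAt]

lemma hasDownAdj_iff {p : Perm (Fin n)} : HasDownAdj ⟨n, p⟩ ↔ numDownAdj p ≠ 0 := by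
  rw [numDownAdj, card_ne_zero, filter_nonempty_iff]
  simp only [mem_univ, true_and, HasDownAdj, IsDownAdjAt]

lemma card_adjAtPos (p : Perm (Fin n)) :
    #{i : Fin n | AdjAtPos ⟨n, p⟩ i} = numUpAdj p + numDownAdj p := by
  simp only [adjAtPos_iff, filter_or]
  refine card_union_of_disjoint (disjoint_filter.2 ?_)
  rintro i - ⟨j, hj, hup⟩ ⟨l, hl, hdown⟩
  obtain rfl : j = l := Fin.ext (hj.trans hl.symm)
  omega

lemma nonOpposingDensity_eq_adjMean (n : ℕ) :
    nonOpposingDensity n =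
      adjMean n fun u d ↦ if 2 ≤ u + d ∧ ¬ (u ≠ 0 ∧ d ≠ 0) then 1 else 0 := by
  simp only [nonOpposingDensity, adjMean, card_adjAtPos, hasUpAdj_iff, hasDownAdj_iff,
    Fintype.expect_eq_sum_div_card, sum_boole, Fintype.card_perm, Fintype.card_fin]

lemma nonOpposingDensity_eq_two_mul_adjMean (n : ℕ) :
    nonOpposingDensity n = 2 * adjMean n fun u d ↦ if u = 0 ∧ 2 ≤ d then 1 else 0 := by
  rw [nonOpposingDensity_eq_adjMean, two_mul]
  nth_rw 2 [← adjMean_swap]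
  rw [← adjMean_add]
  congr with u d
  grind

lemma tendsto_adjMean_up_eq_zero_and_two_le_down :
    Tendsto (fun n ↦ adjMean n fun u d ↦ if u = 0 ∧ 2 ≤ d then 1 else 0) atTop
      (𝓝 (Real.exp (-1) * (1 - 2 * Real.exp (-1)))) := by
  have hsplit (u d : ℕ) : (if u = 0 ∧ 2 ≤ d then 1 else 0 : ℝ) = (if u = 0 then 1 else 0) -
      (if u = 0 then 1 else 0) * (if d = 0 then 1 else 0) -
      (if u = 0 then 1 else 0) * (if d = 1 then 1 else 0) := by
    grind
  have hlim := ((tendsto_adjMean_up_eq_one 0).sub (tendsto_adjMean_up_eq_and_down_eq 0 0)).sub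
    (tendsto_adjMean_up_eq_and_down_eq 0 1)
  simp only [hsplit, adjMean_sub]
  convert hlim using 2
  simp only [Nat.factorial_zero, Nat.factorial_one, Nat.cast_one, div_one]
  ring

theorem tendsto_nonOpposingDensity :
    Tendsto nonOpposingDensity atTop (𝓝 (2 * (Real.exp (-1) * (1 - 2 * Real.exp (-1))))) :=
  (tendsto_adjMean_up_eq_zero_and_two_le_down.const_mul 2).congr fun n ↦
    (nonOpposingDensity_eq_two_mul_adjMean n).symm

end NonOpposing

/-- The proportion of permutations of length `n` with at least two
adjacencies, all of the same type, is asymptotically bounded below by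
`0.1944`. -/
theorem nonOpposing_density_lower_bound :
    (0.1944 : ℝ) ≤ Filter.liminf nonOpposingDensity Filter.atTop := by
  rw [tendsto_nonOpposingDensity.liminf_eq]
  nlinarith [Real.exp_neg_one_gt_d9, Real.exp_neg_one_lt_d9]
end
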